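/- Let α > -1, 0 < t ≤ 2, a ≠ 0, and n ≥ 1. Define R_n(x) = L_n^α(x) + a·L_n^{α+t}(x). If y and y' are consecutive zeros of L_n^{α+t}, then R_n(y)·R_n(y') < 0; hence the zeros of R_n interlace with the zeros of L_n^{α+t}. -/

import Mathlib

open Finset

/-- Generalized Laguerre polynomial `L_n^α(x) = ∑_{k=0}^n (-1)^k C(n+α, n-k) x^k / k!`,
where `C(n+α, n-k) = (∏_{i=1}^{n-k} (α+k+i)) / (n-k)!`. -/
noncomputable def laguerre (α : ℝ) (n : ℕ) (x : ℝ) : ℝ :=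
  ∑ k ∈ Finset.range (n + 1),
    (-1 : ℝ) ^ k * (∏ i ∈ Finset.range (n - k), (α + k + 1 + i)) /
      ((Nat.factorial (n - k) : ℝ) * (Nat.factorial k : ℝ)) * x ^ k

namespace LaguerreInterlacing

open Polynomial MeasureTheory

/-- The integral of a polynomial against the Gamma weight `s ^ β * exp (-s)` on `(0, ∞)`. -/
noncomputable def gammaIntegral (β : ℝ) (f : ℝ[X]) : ℝ :=
  ∫ s in Set.Ioi (0 : ℝ), f.eval s * (s ^ β * Real.exp (-s))

lemma integrableOn_eval_mul_weight {β : ℝ} (hβ : -1 < β) (f : ℝ[X]) :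
    IntegrableOn (fun s : ℝ => f.eval s * (s ^ β * Real.exp (-s))) (Set.Ioi 0) := by
  induction f using Polynomial.induction_on' with
  | add p q hp hq =>
    simp only [eval_add, add_mul]
    exact hp.add hq
  | monomial k c =>
    have hk : 0 < β + k + 1 := by have := Nat.cast_nonneg (α := ℝ) k; linarith
    refine IntegrableOn.congr_fun ((Real.GammaIntegral_convergent hk).const_mul c)
      (fun s hs => ?_) measurableSet_Ioi
    have hs : 0 < s := hs
    simp only [eval_monomial, add_sub_cancel_right, Real.rpow_add hs, Real.rpow_natCast]
    ring

lemma gammaIntegral_add {β : ℝ} (hβ : -1 < β) (f g : ℝ[X]) :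
    gammaIntegral β (f + g) = gammaIntegral β f + gammaIntegral β g := by
  simp only [gammaIntegral, eval_add, add_mul]
  exact integral_add (integrableOn_eval_mul_weight hβ f) (integrableOn_eval_mul_weight hβ g)

lemma gammaIntegral_C_mul (β c : ℝ) (f : ℝ[X]) :
    gammaIntegral β (C c * f) = c * gammaIntegral β f := by
  simp only [gammaIntegral, eval_mul, eval_C, mul_assoc]
  exact integral_const_mul _ _

lemma gammaIntegral_sum {β : ℝ} (hβ : -1 < β) {ι : Type*} (s : Finset ι) (f : ι → ℝ[X]) :
    gammaIntegral β (∑ i ∈ s, f i) = ∑ i ∈ s, gammaIntegral β (f i) := by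
  simp only [gammaIntegral, eval_finsetSum, Finset.sum_mul]
  exact integral_finsetSum _ fun i _ => integrableOn_eval_mul_weight hβ (f i)

lemma gammaIntegral_X_pow {β : ℝ} (hβ : -1 < β) (k : ℕ) :
    gammaIntegral β (X ^ k) = Real.Gamma (β + k + 1) := by
  have hk : 0 < β + k + 1 := by have := Nat.cast_nonneg (α := ℝ) k; linarith
  rw [Real.Gamma_eq_integral hk, gammaIntegral]
  refine setIntegral_congr_fun measurableSet_Ioi fun s hs => ?_
  have hs : 0 < s := hs
  simp only [eval_pow, eval_X, add_sub_cancel_right, Real.rpow_add hs, Real.rpow_natCast]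
  ring

lemma gammaIntegral_X_pow_mul {β : ℝ} (k : ℕ) (f : ℝ[X]) :
    gammaIntegral β (X ^ k * f) = gammaIntegral (β + k) f := by
  refine setIntegral_congr_fun measurableSet_Ioi fun s hs => ?_
  have hs : 0 < s := hs
  simp only [eval_pow, eval_X, eval_mul, Real.rpow_add hs, Real.rpow_natCast]
  ring

lemma setIntegral_Ioi_pos {g : ℝ → ℝ} (hg : IntegrableOn g (Set.Ioi 0))
    (h0 : ∀ s, 0 < s → 0 ≤ g s) (Z : Set ℝ) (hZ : Z.Finite) (hgZ : ∀ s, 0 < s → s ∉ Z → g s ≠ 0) :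
    0 < ∫ s in Set.Ioi (0 : ℝ), g s := by
  have hae : 0 ≤ᵐ[volume.restrict (Set.Ioi (0 : ℝ))] g :=
    (ae_restrict_iff' measurableSet_Ioi).2 (Filter.Eventually.of_forall h0)
  rw [setIntegral_pos_iff_support_of_nonneg_ae hae hg]
  have hsub : Set.Ioi (0 : ℝ) \ Z ⊆ Function.support g ∩ Set.Ioi 0 :=
    fun s hs => ⟨hgZ s hs.1 hs.2, hs.1⟩
  refine lt_of_lt_of_le ?_ (measure_mono hsub)
  rw [measure_sdiff_null (hZ.measure_zero _)]
  simp

lemma gammaIntegral_pos {β : ℝ} (hβ : -1 < β) {f : ℝ[X]} (hf : f ≠ 0)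
    (h0 : ∀ s, 0 < s → 0 ≤ f.eval s) : 0 < gammaIntegral β f := by
  have hw : ∀ s : ℝ, 0 < s → 0 < s ^ β * Real.exp (-s) := fun s hs =>
    mul_pos (Real.rpow_pos_of_pos hs _) (Real.exp_pos _)
  refine setIntegral_Ioi_pos (integrableOn_eval_mul_weight hβ f)
    (fun s hs => mul_nonneg (h0 s hs) (hw s hs).le) (f.rootSet ℝ) (rootSet_finite f ℝ) ?_
  intro s hs hsZ
  refine mul_ne_zero (fun h => hsZ ?_) (hw s hs).ne'
  simpa [mem_rootSet, hf] using h

/-- Raising the exponent of the weight moves its mass to the right of `x`. -/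
lemma rpow_mul_gammaIntegral_lt {β γ : ℝ} (hγ : -1 < γ) (hγβ : γ < β) {x : ℝ} (hx : 0 < x)
    {f : ℝ[X]} (hf : f ≠ 0) :
    x ^ (β - γ) * gammaIntegral γ ((X - C x) * f ^ 2) < gammaIntegral β ((X - C x) * f ^ 2) := by
  set F := (X - C x) * f ^ 2 with hF
  have hF0 : F ≠ 0 := mul_ne_zero (X_sub_C_ne_zero x) (pow_ne_zero 2 hf)
  have hiβ := integrableOn_eval_mul_weight (hγ.trans hγβ) F
  have hiγ := (integrableOn_eval_mul_weight hγ F).const_mul (x ^ (β - γ))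
  rw [← sub_pos, gammaIntegral, gammaIntegral, ← integral_const_mul, ← integral_sub hiβ hiγ]
  have key : ∀ s : ℝ, 0 < s → F.eval s * (s ^ β * Real.exp (-s)) -
      x ^ (β - γ) * (F.eval s * (s ^ γ * Real.exp (-s))) =
      (s - x) * (s ^ (β - γ) - x ^ (β - γ)) * (f.eval s ^ 2 * (s ^ γ * Real.exp (-s))) := by
    intro s hs
    have : s ^ β = s ^ (β - γ) * s ^ γ := by rw [← Real.rpow_add hs, sub_add_cancel]
    simp only [hF, eval_mul, eval_sub, eval_X, eval_C, eval_pow, this]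
    ring
  have hpos : ∀ s : ℝ, 0 < s → s ≠ x → 0 < (s - x) * (s ^ (β - γ) - x ^ (β - γ)) := by
    intro s hs hsx
    rcases lt_or_gt_of_ne hsx with h | h
    · exact mul_pos_of_neg_of_neg (sub_neg.2 h)
        (sub_neg.2 (Real.rpow_lt_rpow hs.le h (sub_pos.2 hγβ)))
    · exact mul_pos (sub_pos.2 h) (sub_pos.2 (Real.rpow_lt_rpow hx.le h (sub_pos.2 hγβ)))
  have hw : ∀ s : ℝ, 0 < s → 0 < s ^ γ * Real.exp (-s) := fun s hs =>
    mul_pos (Real.rpow_pos_of_pos hs _) (Real.exp_pos _)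
  refine setIntegral_Ioi_pos (hiβ.sub hiγ) (fun s hs => ?_) (F.rootSet ℝ) (rootSet_finite F ℝ) ?_
  · simp only [key s hs]
    rcases eq_or_ne s x with rfl | hsx
    · simp
    · exact mul_nonneg (hpos s hs hsx).le (mul_nonneg (sq_nonneg _) (hw s hs).le)
  · intro s hs hsZ
    have hFs : F.eval s ≠ 0 := fun h => hsZ (by simpa [mem_rootSet, hF0] using h)
    simp only [hF, eval_mul, eval_sub, eval_X, eval_C, eval_pow] at hFs
    simp only [key s hs]
    have hsx : s ≠ x := fun h => hFs (by simp [h])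
    exact mul_ne_zero (hpos s hs hsx).ne'
      (mul_ne_zero (right_ne_zero_of_mul hFs) (hw s hs).ne')

/-- The generalized Laguerre polynomial as an element of `ℝ[X]`. -/
noncomputable def laguerrePoly (α : ℝ) (n : ℕ) : ℝ[X] :=
  ∑ k ∈ range (n + 1), C ((-1 : ℝ) ^ k * (∏ i ∈ range (n - k), (α + k + 1 + i)) /
      ((Nat.factorial (n - k) : ℝ) * (Nat.factorial k : ℝ))) * X ^ k

lemma eval_laguerrePoly (α : ℝ) (n : ℕ) (x : ℝ) : (laguerrePoly α n).eval x = laguerre α n x := by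
  simp [laguerrePoly, laguerre, eval_finsetSum]

lemma coeff_laguerrePoly_self (α : ℝ) (n : ℕ) :
    (laguerrePoly α n).coeff n = (-1) ^ n / (Nat.factorial n : ℝ) := by
  simp only [laguerrePoly, finsetSum_coeff, coeff_C_mul_X_pow]
  rw [Finset.sum_eq_single n]
  · simp
  · intro k _ hk; simp [hk.symm]
  · simp

lemma natDegree_laguerrePoly_le (α : ℝ) (n : ℕ) : (laguerrePoly α n).natDegree ≤ n := by
  refine natDegree_sum_le_of_forall_le _ _ fun k hk => (natDegree_C_mul_X_pow_le _ _).trans ?_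
  simp at hk; omega

lemma natDegree_laguerrePoly (α : ℝ) (n : ℕ) : (laguerrePoly α n).natDegree = n := by
  refine natDegree_eq_of_le_of_coeff_ne_zero (natDegree_laguerrePoly_le α n) ?_
  rw [coeff_laguerrePoly_self]
  exact div_ne_zero (pow_ne_zero _ (by norm_num)) (by positivity)

lemma leadingCoeff_laguerrePoly (α : ℝ) (n : ℕ) :
    (laguerrePoly α n).leadingCoeff = (-1) ^ n / (Nat.factorial n : ℝ) := by
  rw [leadingCoeff, natDegree_laguerrePoly, coeff_laguerrePoly_self]

lemma laguerrePoly_ne_zero (α : ℝ) (n : ℕ) : laguerrePoly α n ≠ 0 := by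
  rw [← leadingCoeff_ne_zero, leadingCoeff_laguerrePoly]
  exact div_ne_zero (pow_ne_zero _ (by norm_num)) (by positivity)

lemma Gamma_add_nat {z : ℝ} (hz : 0 < z) (m : ℕ) :
    Real.Gamma (z + m) = (∏ i ∈ range m, (z + i)) * Real.Gamma z := by
  induction m with
  | zero => simp
  | succ m ih =>
    have : z + m ≠ 0 := by positivity
    rw [Nat.cast_succ, ← add_assoc, Real.Gamma_add_one this, ih, prod_range_succ]
    ring

lemma sum_neg_one_pow_choose_mul_eval_eq_zero {n : ℕ} {P : ℝ[X]} (hP : P.natDegree < n) :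
    ∑ k ∈ range (n + 1), (-1 : ℝ) ^ k * n.choose k * P.eval (k : ℝ) = 0 := by
  have h := congrFun (Polynomial.fwdDiff_iter_eq_zero_of_degree_lt hP) 0
  rw [fwdDiff_iter_eq_sum_shift] at h
  have h2 : ∑ k ∈ range (n + 1), (-1 : ℝ) ^ k * n.choose k * P.eval (k : ℝ) = (-1) ^ n *
      ∑ k ∈ range (n + 1), ((-1 : ℤ) ^ (n - k) * n.choose k) • P.eval (0 + k • (1 : ℝ)) := by
    rw [mul_sum]
    refine sum_congr rfl fun k hk => ?_
    have hk : k ≤ n := by simp at hk; omega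
    have hs : (-1 : ℝ) ^ k = (-1) ^ n * (-1) ^ (n - k) := by
      rw [← pow_add, show n + (n - k) = k + 2 * (n - k) by omega, pow_add, pow_mul]
      simp
    simp only [zsmul_eq_mul, nsmul_eq_mul, mul_one, zero_add, hs]
    push_cast
    ring
  rw [h2, h]
  simp

lemma gammaIntegral_laguerrePoly_mul_X_pow {α : ℝ} (hα : -1 < α) {n m : ℕ} (hm : m < n) :
    gammaIntegral α (laguerrePoly α n * X ^ m) = 0 := by
  have hdeg : (∏ i ∈ range m, (X + C (α + 1 + i)) : ℝ[X]).natDegree < n := by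
    rw [natDegree_prod_of_monic _ _ fun i _ => monic_X_add_C _]
    simpa only [natDegree_X_add_C, sum_const, card_range, smul_eq_mul, mul_one] using hm
  rw [laguerrePoly, sum_mul, gammaIntegral_sum hα]
  have hterm : ∀ k ∈ range (n + 1), gammaIntegral α (C ((-1 : ℝ) ^ k *
      (∏ i ∈ range (n - k), (α + k + 1 + i)) /
      ((Nat.factorial (n - k) : ℝ) * (Nat.factorial k : ℝ))) * X ^ k * X ^ m) =
      Real.Gamma (α + n + 1) / Nat.factorial n * ((-1 : ℝ) ^ k * n.choose k *
        (∏ i ∈ range m, (X + C (α + 1 + i)) : ℝ[X]).eval (k : ℝ)) := by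
    intro k hk
    have hk : k ≤ n := by simp at hk; omega
    have hz : 0 < α + k + 1 := by have := Nat.cast_nonneg (α := ℝ) k; linarith
    have h1 := Gamma_add_nat hz (n - k)
    have h2 := Gamma_add_nat hz m
    rw [Nat.cast_sub hk, show α + k + 1 + ((n : ℝ) - k) = α + n + 1 by ring] at h1
    rw [mul_assoc, ← pow_add, gammaIntegral_C_mul, gammaIntegral_X_pow hα, Nat.cast_add,
      show α + ((k : ℝ) + m) + 1 = α + k + 1 + m by ring, h1, h2, Nat.cast_choose ℝ hk, eval_prod]
    have h3 : ∏ i ∈ range m, (X + C (α + 1 + i) : ℝ[X]).eval (k : ℝ) =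
        ∏ i ∈ range m, (α + k + 1 + i) := by
      refine prod_congr rfl fun i _ => ?_
      simp only [eval_add, eval_X, eval_C]
      ring
    rw [h3]
    have := Nat.factorial_ne_zero n
    have := Nat.factorial_ne_zero k
    have := Nat.factorial_ne_zero (n - k)
    field_simp
  rw [sum_congr rfl hterm, ← mul_sum, sum_neg_one_pow_choose_mul_eval_eq_zero hdeg, mul_zero]

lemma gammaIntegral_laguerrePoly_mul {α : ℝ} (hα : -1 < α) {n : ℕ} {f : ℝ[X]}
    (hf : f.degree < n) : gammaIntegral α (laguerrePoly α n * f) = 0 := by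
  conv_lhs => rw [f.as_sum_range_C_mul_X_pow, mul_sum, gammaIntegral_sum hα]
  refine sum_eq_zero fun k _ => ?_
  rw [mul_left_comm, gammaIntegral_C_mul]
  by_cases hk : f.coeff k = 0
  · rw [hk, zero_mul]
  · have hkn : (k : WithBot ℕ) < n := (le_degree_of_ne_zero hk).trans_lt hf
    rw [gammaIntegral_laguerrePoly_mul_X_pow hα (by exact_mod_cast hkn), mul_zero]

lemma not_dvd_laguerrePoly_of_nonneg {α : ℝ} (hα : -1 < α) {n : ℕ} {d : ℝ[X]}
    (hd : d.natDegree ≠ 0) (h0 : ∀ s, 0 < s → 0 ≤ d.eval s) : ¬ d ∣ laguerrePoly α n := by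
  rintro ⟨r, hr⟩
  have hp := laguerrePoly_ne_zero α n
  rw [hr] at hp
  have hd0 := left_ne_zero_of_mul hp
  have hr0 := right_ne_zero_of_mul hp
  have hdeg : d.natDegree + r.natDegree = n := by
    rw [← natDegree_mul hd0 hr0, ← hr, natDegree_laguerrePoly]
  have hrn : r.degree < n := by
    rw [degree_eq_natDegree hr0]
    exact_mod_cast (by omega : r.natDegree < n)
  refine (gammaIntegral_pos hα (f := d * r ^ 2) (mul_ne_zero hd0 (pow_ne_zero 2 hr0))
    fun s hs => ?_).ne' ?_
  · rw [eval_mul, eval_pow]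
    exact mul_nonneg (h0 s hs) (sq_nonneg _)
  · rw [pow_two, ← mul_assoc, ← hr, gammaIntegral_laguerrePoly_mul hα hrn]

lemma eval_nonneg_or_nonpos_of_no_root {g : ℝ[X]} (hg : ∀ s, g.eval s ≠ 0) :
    (∀ s, 0 ≤ g.eval s) ∨ ∀ s, 0 ≤ (-g).eval s := by
  by_contra! h
  obtain ⟨⟨a, ha⟩, b, hb⟩ := h
  obtain ⟨c, hc⟩ := mem_range_of_exists_le_of_exists_ge g.continuous ⟨a, ha.le⟩
    ⟨b, by rw [eval_neg] at hb; linarith⟩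
  exact hg c hc

lemma splits_laguerrePoly {α : ℝ} (hα : -1 < α) (n : ℕ) : (laguerrePoly α n).Splits := by
  have hp := laguerrePoly_ne_zero α n
  obtain ⟨u, hu⟩ := UniqueFactorizationMonoid.factors_prod hp
  rw [← hu]
  refine (Splits.multisetProd fun g hmem => Splits.of_degree_eq_one ?_).mul u.isUnit.splits
  have hg := UniqueFactorizationMonoid.irreducible_of_factor g hmem
  have hdvd := UniqueFactorizationMonoid.dvd_of_mem_factors hmem
  by_contra hdeg
  have hroot : ∀ s, g.eval s ≠ 0 := fun s hs =>
    hdeg (degree_eq_one_of_irreducible_of_root hg hs)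
  have hnat : g.natDegree ≠ 0 := (natDegree_pos_iff_degree_pos.2
    (degree_pos_of_irreducible hg)).ne'
  rcases eval_nonneg_or_nonpos_of_no_root hroot with h | h
  · exact not_dvd_laguerrePoly_of_nonneg hα hnat (fun s _ => h s) hdvd
  · exact not_dvd_laguerrePoly_of_nonneg hα (by rwa [natDegree_neg]) (fun s _ => h s)
      (neg_dvd.2 hdvd)

lemma nodup_roots_laguerrePoly {α : ℝ} (hα : -1 < α) (n : ℕ) :
    (laguerrePoly α n).roots.Nodup := by
  rw [Multiset.nodup_iff_count_le_one]
  intro a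
  by_contra! h
  rw [count_roots] at h
  refine not_dvd_laguerrePoly_of_nonneg hα (d := (X - C a) ^ 2) ?_ (fun s _ => ?_)
    ((le_rootMultiplicity_iff (laguerrePoly_ne_zero α n)).1 h)
  · rw [natDegree_pow, natDegree_X_sub_C]; norm_num
  · rw [eval_pow]; exact sq_nonneg _

lemma exists_laguerrePoly_eq_nodal {α : ℝ} (hα : -1 < α) (n : ℕ) :
    ∃ S : Finset ℝ, #S = n ∧ (∀ x ∈ S, 0 < x) ∧
      laguerrePoly α n = C ((-1) ^ n / (Nat.factorial n : ℝ)) * Lagrange.nodal S id := by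
  have hsplit := splits_laguerrePoly hα n
  have hnodup := nodup_roots_laguerrePoly hα n
  refine ⟨(laguerrePoly α n).roots.toFinset, ?_, fun x hx => ?_, ?_⟩
  · rw [Multiset.toFinset_card_of_nodup hnodup, splits_iff_card_roots.1 hsplit,
      natDegree_laguerrePoly]
  · by_contra! hx0
    refine not_dvd_laguerrePoly_of_nonneg hα (d := X - C x) (by simp) (fun s hs => ?_)
      (dvd_iff_isRoot.2 (isRoot_of_mem_roots (Multiset.mem_toFinset.1 hx)))
    simp only [eval_sub, eval_X, eval_C]
    linarith
  · conv_lhs => rw [hsplit.eq_prod_roots]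
    rw [leadingCoeff_laguerrePoly, Lagrange.nodal_eq, prod_eq_multiset_prod,
      Multiset.toFinset_val, hnodup.dedup]
    rfl

/-- `S` is the node set of the Gauss quadrature for the weight `s ^ β * exp (-s)`. -/
def IsGaussNodes (β : ℝ) (S : Finset ℝ) : Prop :=
  ∀ f : ℝ[X], f.degree < #S → gammaIntegral β (Lagrange.nodal S id * f) = 0

lemma isGaussNodes_of_laguerrePoly_eq {α : ℝ} (hα : -1 < α) {S : Finset ℝ} {c : ℝ} (hc : c ≠ 0)
    (h : laguerrePoly α #S = C c * Lagrange.nodal S id) : IsGaussNodes α S := by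
  intro f hf
  have := gammaIntegral_laguerrePoly_mul hα hf
  rw [h, mul_assoc, gammaIntegral_C_mul] at this
  exact (mul_eq_zero.1 this).resolve_left hc

lemma IsGaussNodes.exists_weights {β : ℝ} (hβ : -1 < β) {S : Finset ℝ} (hS : IsGaussNodes β S) :
    ∃ w : ℝ → ℝ, (∀ x ∈ S, 0 < w x) ∧ ∀ F : ℝ[X], F.degree < 2 * #S →
      gammaIntegral β F = ∑ x ∈ S, w x * F.eval x := by
  have hinj : Set.InjOn (id : ℝ → ℝ) S := Function.injective_id.injOn
  have hmonic : (Lagrange.nodal S (id : ℝ → ℝ)).Monic := Lagrange.nodal_monic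
  have hquad : ∀ F : ℝ[X], F.degree < 2 * #S →
      gammaIntegral β F = ∑ x ∈ S, gammaIntegral β (Lagrange.basis S id x) * F.eval x := by
    intro F hF
    have hmod : F %ₘ Lagrange.nodal S id =
        Lagrange.interpolate S id fun x => F.eval x := by
      refine Lagrange.eq_interpolate_of_eval_eq _ hinj ?_ fun x hx => ?_
      · rw [← Lagrange.degree_nodal (s := S) (v := (id : ℝ → ℝ))]
        exact degree_modByMonic_lt _ hmonic
      · conv_rhs => rw [← modByMonic_add_div F (Lagrange.nodal S id)]
        have h0 : (Lagrange.nodal S id).eval x = 0 :=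
          Lagrange.eval_nodal_at_node (v := (id : ℝ → ℝ)) hx
        rw [eval_add, eval_mul, h0]
        simp
    have hdiv : (F /ₘ Lagrange.nodal S id).degree < #S := by
      by_cases h0 : F /ₘ Lagrange.nodal S id = 0
      · rw [h0, degree_zero]; exact WithBot.bot_lt_coe _
      have hF0 : F ≠ 0 := by rintro rfl; simp at h0
      rw [degree_eq_natDegree hF0] at hF
      have hF' : F.natDegree < 2 * #S := by exact_mod_cast hF
      have hle : #S ≤ F.natDegree := by
        by_contra! hlt
        refine h0 ((divByMonic_eq_zero_iff hmonic).2 ?_)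
        rw [Lagrange.degree_nodal, degree_eq_natDegree hF0]
        exact_mod_cast hlt
      rw [degree_eq_natDegree h0, natDegree_divByMonic _ hmonic, Lagrange.natDegree_nodal]
      exact_mod_cast (by omega : F.natDegree - #S < #S)
    conv_lhs => rw [← modByMonic_add_div F (Lagrange.nodal S id)]
    rw [gammaIntegral_add hβ, hS _ hdiv, add_zero, hmod, Lagrange.interpolate_apply,
      gammaIntegral_sum hβ]
    refine sum_congr rfl fun x _ => ?_
    rw [gammaIntegral_C_mul, mul_comm]
  refine ⟨_, fun x hx => ?_, hquad⟩
  have hb0 := Lagrange.basis_ne_zero hinj hx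
  have hdeg : (Lagrange.basis S id x ^ 2).degree < 2 * #S := by
    rw [degree_eq_natDegree (pow_ne_zero 2 hb0), natDegree_pow, Lagrange.natDegree_basis hinj hx]
    have := card_pos.2 ⟨x, hx⟩
    exact_mod_cast (by omega : 2 * (#S - 1) < 2 * #S)
  have hpos := gammaIntegral_pos hβ (pow_ne_zero 2 hb0) fun s _ => by
    rw [eval_pow]; exact sq_nonneg _
  rw [hquad _ hdeg, sum_eq_single_of_mem x hx] at hpos
  · have h1 : (Lagrange.basis S id x).eval x = 1 := Lagrange.eval_basis_self hinj hx
    simpa [h1] using hpos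
  · intro y hy hyx
    have h1 : (Lagrange.basis S id x).eval y = 0 :=
      Lagrange.eval_basis_of_ne (v := (id : ℝ → ℝ)) hyx.symm hy
    simp [h1]

lemma eval_nodal_eq_zero {S : Finset ℝ} {x : ℝ} (hx : x ∈ S) :
    (Lagrange.nodal S id).eval x = 0 :=
  Lagrange.eval_nodal_at_node (v := (id : ℝ → ℝ)) hx

lemma degree_X_sub_C_mul_sq_lt {f : ℝ[X]} (hf : f ≠ 0) {m : ℕ} (hm : f.natDegree < m) (x : ℝ) :
    ((X - C x) * f ^ 2).degree < 2 * (m : WithBot ℕ) := by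
  rw [degree_eq_natDegree (mul_ne_zero (X_sub_C_ne_zero x) (pow_ne_zero 2 hf)),
    natDegree_mul (X_sub_C_ne_zero x) (pow_ne_zero 2 hf), natDegree_pow, natDegree_X_sub_C]
  exact_mod_cast (by omega : 1 + 2 * f.natDegree < 2 * m)

lemma card_filter_le_add_card_filter_lt (S : Finset ℝ) (x : ℝ) :
    #{s ∈ S | s ≤ x} + #{s ∈ S | x < s} = #S := by
  simp only [← not_le, card_filter_add_card_filter_not]

/-- Gauss nodes move to the right when the exponent of the weight increases. -/
lemma IsGaussNodes.card_filter_le_le_card_filter_lt {α β : ℝ} (hα : -1 < α) (hαβ : α < β)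
    {S T : Finset ℝ} (hS : IsGaussNodes α S) (hT : IsGaussNodes β T) (hcard : #S = #T)
    {x : ℝ} (hx : 0 < x) : #{s ∈ T | s ≤ x} ≤ #{s ∈ S | s < x} := by
  by_contra! hlt
  obtain ⟨w, hw, hwS⟩ := hS.exists_weights hα
  obtain ⟨v, hv, hvT⟩ := hT.exists_weights (hα.trans hαβ)
  set A := Lagrange.nodal {s ∈ S | s < x} (id : ℝ → ℝ)
  set B := Lagrange.nodal {s ∈ T | x < s} (id : ℝ → ℝ)
  have hf0 : A * B ≠ 0 := mul_ne_zero Lagrange.nodal_ne_zero Lagrange.nodal_ne_zero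
  have hdeg : (A * B).natDegree < #S := by
    rw [natDegree_mul Lagrange.nodal_ne_zero Lagrange.nodal_ne_zero, Lagrange.natDegree_nodal,
      Lagrange.natDegree_nodal]
    have := card_filter_le_add_card_filter_lt T x
    omega
  have h1 : 0 ≤ gammaIntegral α ((X - C x) * (A * B) ^ 2) := by
    rw [hwS _ (degree_X_sub_C_mul_sq_lt hf0 hdeg x)]
    refine sum_nonneg fun s hs => mul_nonneg (hw s hs).le ?_
    simp only [eval_mul, eval_sub, eval_X, eval_C, eval_pow]
    rcases lt_or_ge s x with h | h
    · have : A.eval s = 0 := eval_nodal_eq_zero (by simp [hs, h])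
      simp [this]
    · exact mul_nonneg (sub_nonneg.2 h) (sq_nonneg _)
  have h2 : gammaIntegral β ((X - C x) * (A * B) ^ 2) ≤ 0 := by
    rw [hvT _ (degree_X_sub_C_mul_sq_lt hf0 (hcard ▸ hdeg) x)]
    refine sum_nonpos fun s hs => mul_nonpos_of_nonneg_of_nonpos (hv s hs).le ?_
    simp only [eval_mul, eval_sub, eval_X, eval_C, eval_pow]
    rcases lt_or_ge x s with h | h
    · have : B.eval s = 0 := eval_nodal_eq_zero (by simp [hs, h])
      simp [this]
    · exact mul_nonpos_of_nonpos_of_nonneg (sub_nonpos.2 h) (sq_nonneg _)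
  have h3 := rpow_mul_gammaIntegral_lt hα hαβ hx hf0
  have h4 := mul_nonneg (Real.rpow_nonneg hx.le (β - α)) h1
  linarith

/-- Gauss nodes do not jump over a neighbour when the exponent of the weight increases by at
most two. -/
lemma IsGaussNodes.card_filter_le_le_card_filter_lt_add_one {α β : ℝ} (hα : -1 < α) (hβ : -1 < β)
    (hβα : β ≤ α + 2) {S T : Finset ℝ} (hS : IsGaussNodes α S) (hT : IsGaussNodes β T)
    (hcard : #S = #T) {x : ℝ} (hx : 0 < x) : #{s ∈ S | s ≤ x} ≤ #{s ∈ T | s < x} + 1 := by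
  by_contra! hlt
  obtain ⟨w, hw, hwS⟩ := hS.exists_weights hα
  obtain ⟨v, hv, hvT⟩ := hT.exists_weights hβ
  set A := Lagrange.nodal {s ∈ S | x < s} (id : ℝ → ℝ)
  set B := Lagrange.nodal {s ∈ T | s < x} (id : ℝ → ℝ)
  have hf0 : A * B ≠ 0 := mul_ne_zero Lagrange.nodal_ne_zero Lagrange.nodal_ne_zero
  have hdeg : (A * B).natDegree + 1 < #S := by
    rw [natDegree_mul Lagrange.nodal_ne_zero Lagrange.nodal_ne_zero, Lagrange.natDegree_nodal,
      Lagrange.natDegree_nodal]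
    have := card_filter_le_add_card_filter_lt S x
    omega
  have hXf0 : X * (A * B) ≠ 0 := mul_ne_zero X_ne_zero hf0
  have hdegX : (X * (A * B)).natDegree < #S := by rwa [natDegree_X_mul hf0]
  have h1 : gammaIntegral (α + 2) ((X - C x) * (A * B) ^ 2) ≤ 0 := by
    have h := gammaIntegral_X_pow_mul (β := α) 2 ((X - C x) * (A * B) ^ 2)
    rw [Nat.cast_ofNat] at h
    rw [← h, show X ^ 2 * ((X - C x) * (A * B) ^ 2) = (X - C x) * (X * (A * B)) ^ 2 by ring,
      hwS _ (degree_X_sub_C_mul_sq_lt hXf0 hdegX x)]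
    refine sum_nonpos fun s hs => mul_nonpos_of_nonneg_of_nonpos (hw s hs).le ?_
    simp only [eval_mul, eval_sub, eval_X, eval_C, eval_pow]
    rcases lt_or_ge x s with h | h
    · have : A.eval s = 0 := eval_nodal_eq_zero (by simp [hs, h])
      simp [this]
    · exact mul_nonpos_of_nonpos_of_nonneg (sub_nonpos.2 h) (sq_nonneg _)
  have h2 : 0 < gammaIntegral β ((X - C x) * (A * B) ^ 2) := by
    rw [hvT _ (degree_X_sub_C_mul_sq_lt hf0 (by omega) x)]
    have hterm : ∀ s ∈ T, 0 ≤ v s * ((X - C x) * (A * B) ^ 2).eval s := by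
      refine fun s hs => mul_nonneg (hv s hs).le ?_
      simp only [eval_mul, eval_sub, eval_X, eval_C, eval_pow]
      rcases lt_or_ge s x with h | h
      · have : B.eval s = 0 := eval_nodal_eq_zero (by simp [hs, h])
        simp [this]
      · exact mul_nonneg (sub_nonneg.2 h) (sq_nonneg _)
    refine (sum_nonneg hterm).lt_of_ne' fun h0 => hf0 ?_
    rw [sum_eq_zero_iff_of_nonneg hterm] at h0
    refine eq_zero_of_natDegree_lt_card_of_eval_eq_zero' (A * B) (T.erase x) (fun s hs => ?_) ?_
    · obtain ⟨hsx, hsT⟩ := mem_erase.1 hs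
      have := (mul_eq_zero.1 (h0 s hsT)).resolve_left (hv s hsT).ne'
      rw [eval_mul, eval_sub, eval_X, eval_C, eval_pow] at this
      exact eq_zero_of_pow_eq_zero ((mul_eq_zero.1 this).resolve_left (sub_ne_zero.2 hsx))
    · have := pred_card_le_card_erase (s := T) (a := x)
      omega
  rcases hβα.eq_or_lt with rfl | hlt2
  · linarith
  · have h3 := rpow_mul_gammaIntegral_lt hβ hlt2 hx hf0
    have h4 := mul_pos (Real.rpow_pos_of_pos hx (α + 2 - β)) h2
    linarith

lemma neg_one_pow_mul_eval_nodal_pos {S : Finset ℝ} {y : ℝ} (hy : y ∉ S) :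
    0 < (-1) ^ #{s ∈ S | y < s} * (Lagrange.nodal S id).eval y := by
  rw [Lagrange.eval_nodal]
  have h : ((-1 : ℝ)) ^ #{s ∈ S | y < s} = ∏ s ∈ S, if y < s then -1 else 1 := by
    rw [← prod_filter, prod_const]
  rw [h, ← prod_mul_distrib]
  refine prod_pos fun s hs => ?_
  have hne : y ≠ s := fun h => hy (h ▸ hs)
  split_ifs with hlt
  · simpa using hlt
  · simpa using lt_of_le_of_ne (not_lt.1 hlt) hne.symm

/-- If every node of `T` has as many nodes of `S` as of `T` to its right, then the residues of
`nodal S / nodal T` are positive. -/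
lemma nodalWeight_mul_eval_nodal_pos {S T : Finset ℝ} {y : ℝ} (hyS : y ∉ S)
    (h : #{s ∈ S | y < s} = #{s ∈ T | y < s}) :
    0 < Lagrange.nodalWeight T id y * (Lagrange.nodal S id).eval y := by
  have h1 := neg_one_pow_mul_eval_nodal_pos hyS
  have h2 := neg_one_pow_mul_eval_nodal_pos (S := T.erase y) (notMem_erase y T)
  have h3 : ({s ∈ T.erase y | y < s} : Finset ℝ) = {s ∈ T | y < s} := by
    ext s
    simp only [mem_filter, mem_erase]
    exact ⟨fun hs => ⟨hs.1.2, hs.2⟩, fun hs => ⟨⟨hs.2.ne', hs.1⟩, hs.2⟩⟩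
  rw [h3, ← h] at h2
  have h4 := mul_pos h1 (inv_pos.2 h2)
  rw [Lagrange.nodalWeight_eq_eval_nodal_erase_inv]
  have h5 : ((-1 : ℝ) ^ #{s ∈ S | y < s}) * ((-1 : ℝ) ^ #{s ∈ S | y < s})⁻¹ = 1 :=
    mul_inv_cancel₀ (pow_ne_zero _ (by norm_num))
  rw [mul_inv, mul_mul_mul_comm, h5, one_mul, mul_comm] at h4
  exact h4

lemma eval_nodal_eq_mul_one_add_sum {S T : Finset ℝ} (hcard : #S = #T) {x : ℝ} (hx : x ∉ T) :
    (Lagrange.nodal S id).eval x = (Lagrange.nodal T id).eval x *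
      (1 + ∑ y ∈ T, Lagrange.nodalWeight T id y * (Lagrange.nodal S id).eval y * (x - y)⁻¹) := by
  have hdeg : (Lagrange.nodal S (id : ℝ → ℝ) - Lagrange.nodal T (id : ℝ → ℝ)).degree < #T := by
    refine lt_of_lt_of_eq (degree_sub_lt_left ?_ Lagrange.nodal_ne_zero ?_)
      (by rw [Lagrange.degree_nodal, hcard])
    · rw [Lagrange.degree_nodal, Lagrange.degree_nodal, hcard]
    · rw [Lagrange.nodal_monic.leadingCoeff, Lagrange.nodal_monic.leadingCoeff]
  have hint := Lagrange.eq_interpolate_of_eval_eq (v := (id : ℝ → ℝ))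
    (fun y => (Lagrange.nodal S id).eval y) Function.injective_id.injOn hdeg
    (fun y hy => by simp [eval_nodal_eq_zero hy])
  have h := congrArg (eval x) hint
  rw [eval_sub, Lagrange.eval_interpolate_not_at_node _ fun y hy hxy => hx (by
    rw [hxy]; exact hy)] at h
  rw [mul_add, mul_one, ← sub_eq_iff_eq_add', h]
  congr 1
  refine sum_congr rfl fun y _ => ?_
  simp only [id]
  ring

/-- If the residues of `nodal S / nodal T` are positive, this quotient is strictly decreasing
between consecutive nodes of `T`. -/
lemma eval_nodal_div_eval_nodal_lt {S T : Finset ℝ} (hcard : #S = #T) (hT : T.Nonempty)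
    (hres : ∀ y ∈ T, 0 < Lagrange.nodalWeight T id y * (Lagrange.nodal S id).eval y)
    {u v : ℝ} (huv : u < v) (h : ∀ y ∈ T, y < u ∨ v < y) :
    (Lagrange.nodal S id).eval v / (Lagrange.nodal T id).eval v <
      (Lagrange.nodal S id).eval u / (Lagrange.nodal T id).eval u := by
  have hu : u ∉ T := fun hm => (h u hm).elim (lt_irrefl _) (fun h' => lt_asymm huv h')
  have hv : v ∉ T := fun hm => (h v hm).elim (fun h' => lt_asymm huv h') (lt_irrefl _)
  have hne : ∀ {x : ℝ}, x ∉ T → (Lagrange.nodal T id).eval x ≠ 0 := fun hx =>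
    Lagrange.eval_nodal_not_at_node fun y hy hxy => hx (by rw [hxy]; exact hy)
  rw [eval_nodal_eq_mul_one_add_sum hcard hu, eval_nodal_eq_mul_one_add_sum hcard hv,
    mul_div_cancel_left₀ _ (hne hu), mul_div_cancel_left₀ _ (hne hv)]
  refine (add_lt_add_iff_left 1).2 (sum_lt_sum_of_nonempty hT fun y hy => ?_)
  refine mul_lt_mul_of_pos_left ?_ (hres y hy)
  rcases h y hy with h1 | h1
  · exact inv_strictAnti₀ (by linarith) (by linarith)
  · exact (inv_lt_inv_of_neg (by linarith) (by linarith)).2 (by linarith)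

end LaguerreInterlacing

theorem R_interlace_with_shifted (α t a : ℝ) (hα : α > -1) (ht0 : 0 < t)
    (ht2 : t ≤ 2) (ha : a ≠ 0) (n : ℕ) (hn : 1 ≤ n)
    (R : ℝ → ℝ) (hR : ∀ x, R x = laguerre α n x + a * laguerre (α + t) n x)
    (y y' : ℝ) (hlt : y < y') (hy : laguerre (α + t) n y = 0)
    (hy' : laguerre (α + t) n y' = 0)
    (hcons : ∀ u ∈ Set.Ioo y y', laguerre (α + t) n u ≠ 0) :
    R y * R y' < 0 ∧ ∃! z, z ∈ Set.Ioo y y' ∧ R z = 0 := by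
  open LaguerreInterlacing Polynomial in
  have hα' : -1 < α + t := by linarith
  obtain ⟨S, hSn, -, hS⟩ := exists_laguerrePoly_eq_nodal hα n
  obtain ⟨T, hTn, hTpos, hT⟩ := exists_laguerrePoly_eq_nodal hα' n
  set c : ℝ := (-1) ^ n / (Nat.factorial n : ℝ)
  have hc : c ≠ 0 := div_ne_zero (pow_ne_zero _ (by norm_num)) (by positivity)
  have hcard : #S = #T := hSn.trans hTn.symm
  have hGS : IsGaussNodes α S := isGaussNodes_of_laguerrePoly_eq hα hc (hSn.symm ▸ hS)
  have hGT : IsGaussNodes (α + t) T := isGaussNodes_of_laguerrePoly_eq hα' hc (hTn.symm ▸ hT)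
  have hevS : ∀ x, laguerre α n x = c * (Lagrange.nodal S id).eval x := fun x => by
    rw [← eval_laguerrePoly, hS, eval_mul, eval_C]
  have hevT : ∀ x, laguerre (α + t) n x = c * (Lagrange.nodal T id).eval x := fun x => by
    rw [← eval_laguerrePoly, hT, eval_mul, eval_C]
  have hmemT : ∀ x, laguerre (α + t) n x = 0 ↔ x ∈ T := fun x => by
    rw [hevT, mul_eq_zero, or_iff_right hc, Lagrange.eval_nodal, prod_eq_zero_iff]
    simp [sub_eq_zero]
  rw [hmemT] at hy hy'
  replace hcons : ∀ u ∈ T, u ≤ y ∨ y' ≤ u := fun u hu => by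
    by_contra! h
    exact hcons u h ((hmemT u).2 hu)
  have hright : ∀ x ∈ T, x ∉ S ∧ #{s ∈ S | x < s} = #{s ∈ T | x < s} := by
    intro x hx
    have h1 := hGS.card_filter_le_le_card_filter_lt hα (by linarith) hGT hcard (hTpos x hx)
    have h2 := hGS.card_filter_le_le_card_filter_lt_add_one hα hα' (by linarith) hGT hcard
      (hTpos x hx)
    have h3 := card_filter_le_add_card_filter_lt S x
    have h4 := card_filter_le_add_card_filter_lt T x
    have hsplit : ∀ U : Finset ℝ, x ∈ U → #{s ∈ U | s < x} + 1 = #{s ∈ U | s ≤ x} := by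
      intro U hU
      rw [← card_insert_of_notMem (a := x) (s := {s ∈ U | s < x}) (by simp)]
      congr 1
      ext s
      simp only [mem_insert, mem_filter, le_iff_lt_or_eq]
      constructor
      · rintro (rfl | h)
        · exact ⟨hU, Or.inr rfl⟩
        · exact ⟨h.1, Or.inl h.2⟩
      · rintro ⟨h, h' | rfl⟩
        · exact Or.inr ⟨h, h'⟩
        · exact Or.inl rfl
    have h5 := hsplit T hx
    have h6 : #{s ∈ S | s < x} ≤ #{s ∈ S | s ≤ x} :=
      card_le_card (monotone_filter_right _ fun s _ h => le_of_lt h)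
    refine ⟨fun hxS => ?_, by omega⟩
    have h7 := hsplit S hxS
    omega
  have hgap : #{s ∈ T | y < s} = #{s ∈ T | y' < s} + 1 := by
    rw [← card_insert_of_notMem (a := y') (s := {s ∈ T | y' < s}) (by simp)]
    congr 1
    ext s
    simp only [mem_insert, mem_filter]
    constructor
    · rintro ⟨h, h'⟩
      rcases ((hcons s h).resolve_left h'.not_ge).eq_or_lt with h2 | h2
      · exact Or.inl h2.symm
      · exact Or.inr ⟨h, h2⟩
    · rintro (rfl | h)
      · exact ⟨hy', hlt⟩
      · exact ⟨h.1, hlt.trans h.2⟩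
  have hneg : R y * R y' < 0 := by
    have h1 := neg_one_pow_mul_eval_nodal_pos (hright y hy).1
    have h2 := neg_one_pow_mul_eval_nodal_pos (hright y' hy').1
    rw [(hright y hy).2, hgap] at h1
    rw [(hright y' hy').2] at h2
    rw [hR, hR, (hmemT y).2 hy, (hmemT y').2 hy', mul_zero, add_zero, add_zero, hevS, hevS]
    have h3 : ((-1 : ℝ) ^ #{s ∈ T | y' < s}) * (-1) ^ #{s ∈ T | y' < s} = 1 := by
      rw [← mul_pow]; norm_num
    have h4 := mul_pos h1 h2
    rw [pow_succ] at h4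
    have h5 : (Lagrange.nodal S id).eval y * (Lagrange.nodal S id).eval y' < 0 := by
      linear_combination h4 - (Lagrange.nodal S id).eval y * (Lagrange.nodal S id).eval y' * h3
    have h6 : 0 < c * c := mul_self_pos.2 hc
    calc _ = c * c * ((Lagrange.nodal S id).eval y * (Lagrange.nodal S id).eval y') := by ring
      _ < 0 := mul_neg_of_pos_of_neg h6 h5
  refine ⟨hneg, ?_⟩
  have hRcont : Continuous R := by
    have : R = fun x => (C c * Lagrange.nodal S id + C a * (C c * Lagrange.nodal T id)).eval x := by
      ext x
      simp only [hR, hevS, hevT, eval_add, eval_mul, eval_C]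
    rw [this]
    exact Polynomial.continuous _
  obtain ⟨z, hz, hRz⟩ : ∃ z ∈ Set.Ioo y y', R z = 0 := by
    rcases mul_neg_iff.1 hneg with h | h
    · exact intermediate_value_Ioo' hlt.le hRcont.continuousOn ⟨h.2, h.1⟩
    · exact intermediate_value_Ioo hlt.le hRcont.continuousOn h
  have hratio : ∀ x ∈ Set.Ioo y y', R x = 0 →
      (Lagrange.nodal S id).eval x / (Lagrange.nodal T id).eval x = -a := by
    intro x hx hRx
    have hxT : (Lagrange.nodal T id).eval x ≠ 0 := fun h0 => by
      have hxm : x ∈ T := (hmemT x).1 (by rw [hevT, h0, mul_zero])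
      rcases hcons x hxm with h | h
      · exact h.not_gt hx.1
      · exact h.not_gt hx.2
    rw [div_eq_iff hxT]
    refine mul_left_cancel₀ hc ?_
    rw [hR, hevS, hevT] at hRx
    linear_combination hRx
  have hnot_lt : ∀ u ∈ Set.Ioo y y', ∀ v ∈ Set.Ioo y y', R u = 0 → R v = 0 → ¬ u < v := by
    intro u hu v hv hRu hRv huv
    have h := eval_nodal_div_eval_nodal_lt hcard ⟨y, hy⟩ (fun x hx =>
      nodalWeight_mul_eval_nodal_pos (hright x hx).1 (hright x hx).2) huv (fun x hx =>
      (hcons x hx).imp (fun h => h.trans_lt hu.1) (fun h => hv.2.trans_le h))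
    rw [hratio u hu hRu, hratio v hv hRv] at h
    exact lt_irrefl _ h
  refine ⟨z, ⟨hz, hRz⟩, fun u ⟨hu, hRu⟩ => ?_⟩
  exact le_antisymm (not_lt.1 (hnot_lt z hz u hu hRz hRu)) (not_lt.1 (hnot_lt u hu z hz hRu hRz))
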